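/- For every integer n ≥ 6, no two-element subset of the vertex set of the heptagonal circular ladder Γ_n is an edge resolving set of Γ_n; equivalently, for every pair of vertices a, b of Γ_n there exist two distinct edges e, f with d(a,e) = d(a,f) and d(b,e) = d(b,f). -/

import Mathlib

/-- Vertices of the heptagonal circular ladder: four families indexed by `ZMod n`. -/
inductive HCLVertex (n : ℕ) : Type
  | p (t : ZMod n) : HCLVertex n
  | q (t : ZMod n) : HCLVertex n
  | r (t : ZMod n) : HCLVertex n
  | s (t : ZMod n) : HCLVertex n
deriving DecidableEq

/-- Base relation giving the edges of the heptagonal circular ladder `Γ_n`: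
`p_t p_{t+1}`, `p_t q_t`, `q_t r_t`, `r_t s_t`, `s_t r_{t+1}` (indices mod `n`). -/
def gammaRel (n : ℕ) : HCLVertex n → HCLVertex n → Prop
  | .p t, .p u => u = t + 1
  | .p t, .q u => u = t
  | .q t, .r u => u = t
  | .r t, .s u => u = t
  | .s t, .r u => u = t + 1
  | _, _ => False

/-- The heptagonal circular ladder `Γ_n`. -/
def Gamma (n : ℕ) : SimpleGraph (HCLVertex n) :=
  SimpleGraph.fromRel (gammaRel n)

/-- The extra edges `r_t q_{t+1}` added to `Γ_n` to obtain `Δ_n`. -/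
def deltaRel (n : ℕ) : HCLVertex n → HCLVertex n → Prop
  | .r t, .q u => u = t + 1
  | _, _ => False

/-- The convex polytope graph `Δ_n`, obtained from `Γ_n` by adding the edges `r_t q_{t+1}`. -/
def Delta (n : ℕ) : SimpleGraph (HCLVertex n) :=
  SimpleGraph.fromRel (fun v w => gammaRel n v w ∨ deltaRel n v w)

/-- `W` is a resolving set of `G`: every pair of distinct vertices is distinguished by
its distance to some vertex of `W`. -/
def IsResolving {V : Type*} (G : SimpleGraph V) (W : Set V) : Prop :=
  ∀ u v : V, u ≠ v → ∃ w ∈ W, G.dist w u ≠ G.dist w v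

/-- Distance from a vertex `x` to an edge `e = yz`: `min (d x y) (d x z)`. -/
noncomputable def edgeDist {V : Type*} (G : SimpleGraph V) (x : V) (e : Sym2 V) : ℕ :=
  Sym2.lift ⟨fun y z => min (G.dist x y) (G.dist x z), fun y z => min_comm _ _⟩ e

/-- `W` is an edge resolving set of `G`: every pair of distinct edges is distinguished by
its distance to some vertex of `W`. -/
def IsEdgeResolving {V : Type*} (G : SimpleGraph V) (W : Set V) : Prop :=
  ∀ e ∈ G.edgeSet, ∀ f ∈ G.edgeSet, e ≠ f → ∃ w ∈ W, edgeDist G w e ≠ edgeDist G w f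

/-!
Let `{a, b}` be a pair of vertices. If `a` is a `p`- or an `r`-vertex, it has three neighbours; the
three edges at `a` are at distance `0` from `a` and take at most two distances from `b`.

If `a` and `b` are `q`- or `s`-vertices, all distances from them are explicit: a shortest path runs
either along the `p`-cycle or along the cycle of the `r`- and `s`-vertices, the first being better
for far targets. Two edges `vx`, `vy` are equidistant from `w` when `x` and `y` are both nearer to
`w` than `v` is, or both not nearer. So it suffices to find a vertex `v` at which `a` and `b` both
fail to separate the same two edges: far from `w` the edges `r_t s_t` and `s_{t-1} r_t` are alike,
because the shortest path to `r_t` arrives through `q_t`; near `w` one of them is like `q_t r_t`.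
In two exceptional positions, with `a` and `b` nearly antipodal, the two edges lie on opposite
sides of `a`.
-/

section DistanceCriterion

variable {V : Type*} {G : SimpleGraph V} {f : V → ℕ}

theorem le_add_walk_length_of_adj_le (hf : ∀ u v, G.Adj u v → f v ≤ f u + 1) {u v : V}
    (p : G.Walk u v) : f v ≤ f u + p.length := by
  induction p with
  | nil => simp
  | cons h p ih =>
    have hstep := hf _ _ h
    rw [SimpleGraph.Walk.length_cons]
    omega

theorem exists_walk_length_le_of_descent {a : V}
    (hf : ∀ v, v ≠ a → ∃ w, G.Adj w v ∧ f w + 1 = f v) (v : V) :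
    ∃ p : G.Walk a v, p.length ≤ f v := by
  induction hk : f v using Nat.strong_induction_on generalizing v with
  | _ k ih =>
    by_cases hv : v = a
    · subst hv
      exact ⟨.nil, Nat.zero_le k⟩
    · obtain ⟨w, hwv, hw⟩ := hf v hv
      obtain ⟨p, hp⟩ := ih (f w) (by omega) w rfl
      exact ⟨p.concat hwv, by rw [SimpleGraph.Walk.length_concat]; omega⟩

theorem dist_eq_of_adj_le_of_descent {a : V} (ha : f a = 0)
    (hle : ∀ u v, G.Adj u v → f v ≤ f u + 1)
    (hdesc : ∀ v, v ≠ a → ∃ w, G.Adj w v ∧ f w + 1 = f v) (v : V) : G.dist a v = f v := by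
  obtain ⟨p, hp⟩ := exists_walk_length_le_of_descent hdesc v
  obtain ⟨q, hq⟩ := p.reachable.exists_walk_length_eq_dist
  have upper := SimpleGraph.dist_le p
  have lower := le_add_walk_length_of_adj_le hle q
  omega

end DistanceCriterion

section EdgeDist

variable {V : Type*} {G : SimpleGraph V}

theorem edgeDist_mk (x y z : V) : edgeDist G x s(y, z) = min (G.dist x y) (G.dist x z) := rfl

theorem not_isEdgeResolving_pair {a b : V} {e f : Sym2 V} (he : e ∈ G.edgeSet)
    (hf : f ∈ G.edgeSet) (hef : e ≠ f) (ha : edgeDist G a e = edgeDist G a f)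
    (hb : edgeDist G b e = edgeDist G b f) : ¬ IsEdgeResolving G {a, b} := by
  intro h
  obtain ⟨w, rfl | rfl, hw⟩ := h e he f hf hef
  exacts [hw ha, hw hb]

theorem edgeDist_eq_or_add_one_eq_dist (hG : G.Connected) (b : V) {v x : V} (h : G.Adj v x) :
    edgeDist G b s(v, x) = G.dist b v ∨ edgeDist G b s(v, x) + 1 = G.dist b v := by
  have htri := hG.dist_triangle (u := b) (v := x) (w := v)
  rw [SimpleGraph.dist_eq_one_iff_adj.2 h.symm] at htri
  rw [edgeDist_mk]
  omega

-- All edges at `v` are at distance `0` from `v`, and only two distances from `b` are available.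
theorem not_isEdgeResolving_pair_of_three_neighbors (hG : G.Connected) {v x y z : V} (b : V)
    (hx : G.Adj v x) (hy : G.Adj v y) (hz : G.Adj v z) (hxy : x ≠ y) (hxz : x ≠ z)
    (hyz : y ≠ z) : ¬ IsEdgeResolving G {v, b} := by
  intro h
  have edgeDist_ne {x y : V} (hx : G.Adj v x) (hy : G.Adj v y) (hxy : x ≠ y) :
      edgeDist G b s(v, x) ≠ edgeDist G b s(v, y) := fun hb =>
    not_isEdgeResolving_pair hx hy (fun he => hxy (Sym2.congr_right.1 he))
      (by simp [edgeDist_mk]) hb h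
  have := edgeDist_ne hx hy hxy
  have := edgeDist_ne hx hz hxz
  have := edgeDist_ne hy hz hyz
  have := edgeDist_eq_or_add_one_eq_dist hG b hx
  have := edgeDist_eq_or_add_one_eq_dist hG b hy
  have := edgeDist_eq_or_add_one_eq_dist hG b hz
  omega

end EdgeDist

section Cycle

variable {n : ℕ}

theorem zmod_one_ne_zero (hn : 2 ≤ n) : (1 : ZMod n) ≠ 0 := by
  have : Fact (1 < n) := ⟨hn⟩
  exact one_ne_zero

theorem zmod_two_ne_zero (hn : 3 ≤ n) : (2 : ZMod n) ≠ 0 := by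
  rw [← Nat.cast_ofNat, Ne, ZMod.natCast_eq_zero_iff]
  exact Nat.not_dvd_of_pos_of_lt two_pos hn

/-- The distance from `x` to `0` on the cycle `ℤ/n`. -/
def cycleNorm (x : ZMod n) : ℕ := x.valMinAbs.natAbs

theorem cycleNorm_eq_zero {x : ZMod n} : cycleNorm x = 0 ↔ x = 0 := by
  rw [cycleNorm, Int.natAbs_eq_zero, ZMod.valMinAbs_eq_zero]

variable [NeZero n]

theorem cycleNorm_intCast {z : ℤ} (hz : z.natAbs ≤ n) :
    cycleNorm (z : ZMod n) = min z.natAbs (n - z.natAbs) := by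
  have natCast (k : ℕ) (hk : k ≤ n) : cycleNorm (k : ZMod n) = min k (n - k) := by
    rcases hk.lt_or_eq with hk | rfl
    · rw [cycleNorm, ZMod.valMinAbs_natAbs_eq_min, ZMod.val_cast_of_lt hk]
    · simp [cycleNorm]
  rw [← natCast _ hz]
  rcases z.natAbs_eq with h | h <;> rw [h] <;> simp [cycleNorm, ZMod.natAbs_valMinAbs_neg]

theorem exists_intCast_eq_cycleNorm (x : ZMod n) :
    ∃ z : ℤ, z = x ∧ 2 * z.natAbs ≤ n ∧ cycleNorm x = z.natAbs :=
  ⟨x.valMinAbs, x.coe_valMinAbs, by have := x.natAbs_valMinAbs_le; omega, rfl⟩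

theorem cycleNorm_add_one_le (x : ZMod n) : cycleNorm (x + 1) ≤ cycleNorm x + 1 := by
  obtain ⟨z, rfl, hz, hx⟩ := exists_intCast_eq_cycleNorm x
  have hn := NeZero.pos n
  rw [hx, ← Int.cast_one, ← Int.cast_add, cycleNorm_intCast (by omega)]
  omega

theorem cycleNorm_le_add_one (x : ZMod n) : cycleNorm x ≤ cycleNorm (x + 1) + 1 := by
  have h := cycleNorm_add_one_le (-(x + 1))
  rwa [neg_add_rev, neg_add_cancel_comm, cycleNorm, cycleNorm, ZMod.natAbs_valMinAbs_neg,
    ← neg_add_rev, ZMod.natAbs_valMinAbs_neg] at h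

theorem cycleNorm_descent {x : ZMod n} (hx : cycleNorm x ≠ 0) :
    cycleNorm (x - 1) + 1 = cycleNorm x ∨ cycleNorm (x + 1) + 1 = cycleNorm x := by
  obtain ⟨z, rfl, hz, hxz⟩ := exists_intCast_eq_cycleNorm x
  rw [hxz] at hx ⊢
  rw [← Int.cast_one, ← Int.cast_add, ← Int.cast_sub]
  rcases lt_or_ge 0 z with hpos | hneg
  · left
    rw [cycleNorm_intCast (by omega)]
    omega
  · right
    rw [cycleNorm_intCast (by omega)]
    omega

theorem exists_intCast_lifts (i j : ZMod n) :
    ∃ x y : ℤ, x = i ∧ y = j ∧ -n ≤ 2 * (y - x) ∧ 2 * (y - x) < n := by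
  obtain ⟨hlt, hle⟩ := (i - j).valMinAbs_mem_Ioc
  refine ⟨i.val, i.val - (i - j).valMinAbs, by simp, by simp, by omega, by omega⟩

end Cycle

namespace HCLVertex

variable {n : ℕ}

section Distance

/-- The distance to the `p`-cycle. The vertices of degree two are those of odd height. -/
def height : HCLVertex n → ℕ
  | p _ => 0
  | q _ => 1
  | r _ => 2
  | s _ => 3

/-- The distance along the `p`-cycle from the nearest foot of `w` to `p t`. The feet of `w` are the
vertices of the `p`-cycle closest to `w`; there are two of them if `w` is an `s`-vertex. -/
def steps : HCLVertex n → ZMod n → ℕ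
  | p i, t | q i, t | r i, t => cycleNorm (t - i)
  | s i, t => min (cycleNorm (t - i)) (cycleNorm (t - (i + 1)))

/-- The distance to a `p`-vertex that is `m` steps away, from a vertex of odd height `h`. -/
def pDist (h m : ℕ) : ℕ := m + h

/-- The distance to a `q`-vertex that is `m` steps away, from a vertex of odd height `h`: the path
leaves either the cycle of the `r`- and `s`-vertices or the `p`-cycle. -/
def qDist (h m : ℕ) : ℕ := if h = 1 ∧ m = 0 then 0 else min (2 * m + 2) (m + h + 1)

/-- The distance to an `r`-vertex that is `m` steps away, from a vertex of odd height `h`: the path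
runs either along the cycle of the `r`- and `s`-vertices or along the `p`-cycle. -/
def rDist (h m : ℕ) : ℕ := min (2 * m + 1) (m + h + 2)

/-- The distance to an `s`-vertex whose neighbours are `m` and `m'` steps away, from a vertex of
odd height `h`. -/
def sDist (h m m' : ℕ) : ℕ := if h = 3 ∧ m = 0 ∧ m' = 0 then 0 else
  1 + min (rDist h m) (rDist h m')

/-- The distance from `w`, of odd height, to the other vertices of `Γ_n`. -/
def distFrom (w : HCLVertex n) : HCLVertex n → ℕ
  | p t => pDist w.height (w.steps t)
  | q t => qDist w.height (w.steps t)
  | r t => rDist w.height (w.steps t)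
  | s t => sDist w.height (w.steps t) (w.steps (t + 1))

theorem steps_add_one_le [NeZero n] (w : HCLVertex n) (t : ZMod n) :
    w.steps (t + 1) ≤ w.steps t + 1 := by
  have h i := cycleNorm_add_one_le (t - i)
  simp only [sub_add_eq_add_sub] at h
  cases w with
  | p i | q i | r i => exact h i
  | s i =>
    have h₀ := h i
    have h₁ := h (i + 1)
    simp only [steps]
    omega

theorem steps_le_add_one [NeZero n] (w : HCLVertex n) (t : ZMod n) :
    w.steps t ≤ w.steps (t + 1) + 1 := by
  have h i := cycleNorm_le_add_one (t - i)
  simp only [sub_add_eq_add_sub] at h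
  cases w with
  | p i | q i | r i => exact h i
  | s i =>
    have h₀ := h i
    have h₁ := h (i + 1)
    simp only [steps]
    omega

theorem steps_descent [NeZero n] {w : HCLVertex n} {t : ZMod n} (ht : w.steps t ≠ 0) :
    w.steps (t - 1) + 1 = w.steps t ∨ w.steps (t + 1) + 1 = w.steps t := by
  have h i := cycleNorm_descent (x := t - i)
  simp only [sub_add_eq_add_sub, sub_right_comm _ _ (1 : ZMod n)] at h
  cases w with
  | p i | q i | r i => exact h i ht
  | s i =>
    have h₀ := h i
    have h₁ := h (i + 1)
    have hpred : t - 1 - i = t - (i + 1) := by ring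
    simp only [steps, hpred, add_sub_add_right_eq_sub] at ht h₀ h₁ ⊢
    omega

theorem steps_q_eq_zero {i t : ZMod n} : (q i).steps t = 0 ↔ t = i := by
  rw [steps, cycleNorm_eq_zero, sub_eq_zero]

theorem steps_s_eq_zero {i t : ZMod n} : (s i).steps t = 0 ↔ t = i ∨ t = i + 1 := by
  rw [steps, Nat.min_eq_zero_iff, cycleNorm_eq_zero, cycleNorm_eq_zero, sub_eq_zero, sub_eq_zero]

theorem height_le_three (w : HCLVertex n) : w.height ≤ 3 := by
  cases w <;> simp [height]

theorem exists_eq_q_or_s_of_odd_height {w : HCLVertex n} (hw : Odd w.height) :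
    ∃ i, w = q i ∨ w = s i := by
  cases w with
  | q i => exact ⟨i, .inl rfl⟩
  | s i => exact ⟨i, .inr rfl⟩
  | p | r => simp [height, Nat.odd_iff] at hw

theorem distFrom_self {w : HCLVertex n} (hw : Odd w.height) : distFrom w w = 0 := by
  obtain ⟨i, rfl | rfl⟩ := exists_eq_q_or_s_of_odd_height hw
  · simp [distFrom, height, qDist, steps_q_eq_zero]
  · simp [distFrom, height, sDist, steps_s_eq_zero]

theorem eq_q_of_steps_eq_zero {w : HCLVertex n} {t : ZMod n} (hw : w.height = 1)
    (ht : w.steps t = 0) : q t = w := by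
  obtain ⟨i, rfl | rfl⟩ := exists_eq_q_or_s_of_odd_height (w := w) (hw ▸ odd_one)
  · rw [steps_q_eq_zero.1 ht]
  · cases hw

theorem eq_s_of_steps_eq_zero (hn : 3 ≤ n) {w : HCLVertex n} {t : ZMod n} (hw : w.height = 3)
    (ht : w.steps t = 0) (ht' : w.steps (t + 1) = 0) : s t = w := by
  obtain ⟨i, rfl | rfl⟩ := exists_eq_q_or_s_of_odd_height (w := w) (hw ▸ by decide)
  · cases hw
  · rcases steps_s_eq_zero.1 ht with rfl | rfl
    · rfl
    · rcases steps_s_eq_zero.1 ht' with h | h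
      · exact absurd (by linear_combination h) (zmod_two_ne_zero hn)
      · exact absurd (by linear_combination h) (zmod_one_ne_zero (by omega))

theorem steps_sub_one_or_add_one_eq_zero {w : HCLVertex n} {t : ZMod n} (hw : w.height = 3)
    (ht : w.steps t = 0) : w.steps (t - 1) = 0 ∨ w.steps (t + 1) = 0 := by
  obtain ⟨i, rfl | rfl⟩ := exists_eq_q_or_s_of_odd_height (w := w) (hw ▸ by decide)
  · cases hw
  · simp only [steps_s_eq_zero] at ht ⊢
    rcases ht with rfl | rfl
    · exact .inr (.inr rfl)
    · exact .inl (.inl (add_sub_cancel_right _ _))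

theorem adj_p_p (hn : 2 ≤ n) (t : ZMod n) : (Gamma n).Adj (p t) (p (t + 1)) := by
  simp [Gamma, gammaRel, zmod_one_ne_zero hn]

theorem adj_p_q (t : ZMod n) : (Gamma n).Adj (p t) (q t) := by
  simp [Gamma, gammaRel]

theorem adj_q_r (t : ZMod n) : (Gamma n).Adj (q t) (r t) := by
  simp [Gamma, gammaRel]

theorem adj_r_s (t : ZMod n) : (Gamma n).Adj (r t) (s t) := by
  simp [Gamma, gammaRel]

theorem adj_s_r (t : ZMod n) : (Gamma n).Adj (s t) (r (t + 1)) := by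
  simp [Gamma, gammaRel]

theorem adj_p_sub_one_p (hn : 2 ≤ n) (t : ZMod n) : (Gamma n).Adj (p (t - 1)) (p t) := by
  simpa only [sub_add_cancel] using adj_p_p hn (t - 1)

theorem adj_s_sub_one_r (t : ZMod n) : (Gamma n).Adj (s (t - 1)) (r t) := by
  simp [Gamma, gammaRel]

theorem distFrom_le_of_gammaRel [NeZero n] (w : HCLVertex n) {u v : HCLVertex n}
    (h : gammaRel n u v) :
    distFrom w v ≤ distFrom w u + 1 ∧ distFrom w u ≤ distFrom w v + 1 := by
  cases u with
  | p t | q t | r t | s t =>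
    have hle := w.steps_add_one_le t
    have hge := w.steps_le_add_one t
    have hheight := w.height_le_three
    cases v <;> simp only [gammaRel] at h <;> subst h <;>
      simp only [distFrom, pDist, qDist, rDist, sDist] <;> grind

theorem distFrom_le_of_adj [NeZero n] (w : HCLVertex n) {u v : HCLVertex n}
    (h : (Gamma n).Adj u v) : distFrom w v ≤ distFrom w u + 1 := by
  rw [Gamma, SimpleGraph.fromRel_adj] at h
  rcases h.2 with h | h
  · exact (distFrom_le_of_gammaRel w h).1
  · exact (distFrom_le_of_gammaRel w h).2

theorem distFrom_descent (hn : 3 ≤ n) {w : HCLVertex n} (hw : Odd w.height) (v : HCLVertex n)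
    (hv : v ≠ w) : ∃ u, (Gamma n).Adj u v ∧ distFrom w u + 1 = distFrom w v := by
  have : NeZero n := ⟨by omega⟩
  have hheight := w.height_le_three
  by_contra! hcon
  cases v with
  | p t =>
    have hpred := hcon _ (adj_p_sub_one_p (by omega) t)
    have hsucc := hcon _ (adj_p_p (by omega) t).symm
    have hq := hcon _ (adj_p_q t).symm
    have hdesc := w.steps_descent (t := t)
    simp only [distFrom, pDist, qDist] at hpred hsucc hq
    grind
  | q t =>
    have hp := hcon _ (adj_p_q t)
    have hr := hcon _ (adj_q_r t).symm
    have hsource := eq_q_of_steps_eq_zero (w := w) (t := t)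
    simp only [distFrom, pDist, qDist, rDist] at hp hr
    grind
  | r t =>
    have hq := hcon _ (adj_q_r t)
    have hsucc := hcon _ (adj_r_s t).symm
    have hpred := hcon _ (adj_s_sub_one_r t)
    have hdesc := w.steps_descent (t := t)
    have hfoot := w.steps_sub_one_or_add_one_eq_zero (t := t)
    simp only [distFrom, qDist, rDist, sDist, sub_add_cancel] at hq hsucc hpred
    grind
  | s t =>
    have hpred := hcon _ (adj_r_s t)
    have hsucc := hcon _ (adj_s_r t).symm
    have hsource := eq_s_of_steps_eq_zero hn (w := w) (t := t)
    simp only [distFrom, rDist, sDist] at hpred hsucc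
    grind

theorem dist_gamma (hn : 3 ≤ n) {w : HCLVertex n} (hw : Odd w.height) (v : HCLVertex n) :
    (Gamma n).dist w v = distFrom w v := by
  have : NeZero n := ⟨by omega⟩
  exact dist_eq_of_adj_le_of_descent (distFrom_self hw) (fun _ _ => distFrom_le_of_adj w)
    (distFrom_descent hn hw) v

theorem connected_gamma (hn : 3 ≤ n) : (Gamma n).Connected := by
  have reachable v : (Gamma n).Reachable (q 0) v :=
    (exists_walk_length_le_of_descent (distFrom_descent hn odd_one) v).choose.reachable
  have : Nonempty (HCLVertex n) := ⟨q 0⟩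
  exact ⟨fun u v => (reachable u).symm.trans (reachable v)⟩

end Distance

/-- The five families of edges of `Γ_n`, named after the families of their end points. -/
inductive EdgeFamily
  | pp | pq | qr | rs | sr

namespace EdgeFamily

/-- The edge with index `t` in a family; its first end point has index `t`. -/
def edge : EdgeFamily → ZMod n → Sym2 (HCLVertex n)
  | pp, t => s(p t, p (t + 1))
  | pq, t => s(p t, q t)
  | qr, t => s(q t, r t)
  | rs, t => s(r t, s t)
  | sr, t => s(s t, r (t + 1))

/-- The distance, from a vertex of odd height `h`, to the edge of a family with an index `t` such
that the positions `t` and `t + 1` are `m` and `m'` steps away. -/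
def dist : EdgeFamily → ℕ → ℕ → ℕ → ℕ
  | pp, h, m, m' => min (pDist h m) (pDist h m')
  | pq, h, m, _ => min (pDist h m) (qDist h m)
  | qr, h, m, _ => min (qDist h m) (rDist h m)
  | rs, h, m, m' => min (rDist h m) (sDist h m m')
  | sr, h, m, m' => min (sDist h m m') (rDist h m')

theorem edge_mem_edgeSet (hn : 2 ≤ n) (F : EdgeFamily) (t : ZMod n) :
    F.edge t ∈ (Gamma n).edgeSet := by
  cases F
  exacts [adj_p_p hn t, adj_p_q t, adj_q_r t, adj_r_s t, adj_s_r t]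

theorem edge_ne_edge (hn : 2 ≤ n) {F F' : EdgeFamily} (hF : F ≠ F') (t t' : ZMod n) :
    F.edge t ≠ F'.edge t' := by
  have add_one_ne (t : ZMod n) : t + 1 ≠ t := by simp [zmod_one_ne_zero hn]
  rw [edge.eq_def, edge.eq_def]
  cases F <;> cases F' <;> grind

theorem edgeDist_edge (hn : 3 ≤ n) {w : HCLVertex n} (hw : Odd w.height) (F : EdgeFamily)
    (t : ZMod n) :
    edgeDist (Gamma n) w (F.edge t) = F.dist w.height (w.steps t) (w.steps (t + 1)) := by
  cases F <;> simp only [edge, edgeDist_mk, dist_gamma hn hw] <;> rfl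

end EdgeFamily

section OddHeight

theorem odd_height_q (i : ZMod n) : Odd (q i).height := ⟨0, rfl⟩

theorem odd_height_s (i : ZMod n) : Odd (s i).height := ⟨1, rfl⟩

theorem steps_q_intCast [NeZero n] {x z : ℤ} (h : (z - x).natAbs ≤ n) :
    (q (x : ZMod n)).steps z = min (z - x).natAbs (n - (z - x).natAbs) := by
  rw [steps, ← Int.cast_sub, cycleNorm_intCast h]

theorem steps_s_intCast [NeZero n] {x z : ℤ} (h : (z - x).natAbs ≤ n)
    (h' : (z - (x + 1)).natAbs ≤ n) :
    (s (x : ZMod n)).steps z = min (min (z - x).natAbs (n - (z - x).natAbs))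
      (min (z - (x + 1)).natAbs (n - (z - (x + 1)).natAbs)) := by
  rw [steps, ← Int.cast_sub, cycleNorm_intCast h, ← Int.cast_one, ← Int.cast_add, ← Int.cast_sub,
    cycleNorm_intCast h']

theorem not_isEdgeResolving_of_dist_eq (hn : 3 ≤ n) {a b : HCLVertex n} (ha : Odd a.height)
    (hb : Odd b.height) (F F' : EdgeFamily) (z z' : ℤ) (hF : F ≠ F')
    (hdist_a : F.dist a.height (a.steps z) (a.steps (z + 1 : ℤ)) =
      F'.dist a.height (a.steps z') (a.steps (z' + 1 : ℤ)))
    (hdist_b : F.dist b.height (b.steps z) (b.steps (z + 1 : ℤ)) =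
      F'.dist b.height (b.steps z') (b.steps (z' + 1 : ℤ))) :
    ¬ IsEdgeResolving (Gamma n) {a, b} := by
  simp only [Int.cast_add, Int.cast_one, ← F.edgeDist_edge hn ha, ← F.edgeDist_edge hn hb,
    ← F'.edgeDist_edge hn ha, ← F'.edgeDist_edge hn hb] at hdist_a hdist_b
  have two_le : 2 ≤ n := by omega
  exact not_isEdgeResolving_pair (F.edge_mem_edgeSet two_le _) (F'.edge_mem_edgeSet two_le _)
    (EdgeFamily.edge_ne_edge two_le hF _ _) hdist_a hdist_b

open EdgeFamily

theorem not_isEdgeResolving_q_q_intCast (hn : 6 ≤ n) {x y : ℤ} (hxy : x ≤ y)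
    (hyx : 2 * (y - x) ≤ n) :
    ¬ IsEdgeResolving (Gamma n) {q (x : ZMod n), q (y : ZMod n)} := by
  have : NeZero n := ⟨by omega⟩
  have not_resolving := not_isEdgeResolving_of_dist_eq (n := n) (by omega) (odd_height_q x)
    (odd_height_q y)
  have hcases : 3 ≤ y - x ∨ (y - x ≤ 2 ∧ 2 * (y - x) + 3 ≤ n) ∨ (n = 6 ∧ y = x + 2) := by omega
  rcases hcases with h | h | h
  case' inl => refine not_resolving rs sr x (x - 1) nofun ?_ ?_
  case' inr.inl => refine not_resolving pp pq (y + 1) (y + 1) nofun ?_ ?_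
  case' inr.inr => refine not_resolving qr pq (x + 1) (x - 2) nofun ?_ ?_
  all_goals
    simp (disch := omega) only [steps_q_intCast]
    grind (splits := 20) [height, EdgeFamily.dist, pDist, qDist, rDist, sDist]

theorem not_isEdgeResolving_q_s_intCast (hn : 6 ≤ n) {x y : ℤ} (hyx : -n ≤ 2 * (y - x))
    (hxy : 2 * (y - x) < n) :
    ¬ IsEdgeResolving (Gamma n) {q (x : ZMod n), s (y : ZMod n)} := by
  have : NeZero n := ⟨by omega⟩
  have not_resolving := not_isEdgeResolving_of_dist_eq (n := n) (by omega) (odd_height_q x)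
    (odd_height_s y)
  have hcases : (y - x ≤ -6 ∨ 5 ≤ y - x) ∨ (2 ≤ y - x ∧ y - x ≤ 4) ∨
      (-5 ≤ y - x ∧ y - x ≤ -3) ∨ (0 ≤ y - x ∧ y - x ≤ 1) ∨ (-2 ≤ y - x ∧ y - x ≤ -1) := by omega
  rcases hcases with h | h | h | h | h
  case' inl => refine not_resolving rs sr x (x - 1) nofun ?_ ?_
  case' inr.inl => refine not_resolving qr sr (x + 2) (x + 1) nofun ?_ ?_
  case' inr.inr.inl => refine not_resolving qr rs (x - 2) (x - 2) nofun ?_ ?_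
  case' inr.inr.inr.inl => refine not_resolving pp pq (x - 2) (x - 1) nofun ?_ ?_
  case' inr.inr.inr.inr => refine not_resolving pp pq (x + 1) (x + 1) nofun ?_ ?_
  all_goals
    simp (disch := omega) only [steps_q_intCast, steps_s_intCast]
    grind (splits := 20) [height, EdgeFamily.dist, pDist, qDist, rDist, sDist]

theorem not_isEdgeResolving_s_s_intCast_of_nearly_antipodal (hn : 6 ≤ n) {x y : ℤ}
    (hyx : 2 * (y - x) + 2 ≤ n) (hn_le : n ≤ 2 * (y - x) + 3) :
    ¬ IsEdgeResolving (Gamma n) {s (x : ZMod n), s (y : ZMod n)} := by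
  have : NeZero n := ⟨by omega⟩
  have not_resolving := not_isEdgeResolving_of_dist_eq (n := n) (by omega) (odd_height_s x)
    (odd_height_s y)
  have hcases : y - x ≤ 3 ∨ (4 ≤ y - x ∧ y - x ≤ 5) ∨ (6 ≤ y - x ∧ y - x ≤ 8) ∨ 9 ≤ y - x := by
    omega
  rcases hcases with h | h | h | h
  case' inl => refine not_resolving qr sr x (x - 1) nofun ?_ ?_
  case' inr.inl => refine not_resolving qr rs (x - 4) (x - 4) nofun ?_ ?_
  case' inr.inr.inl => refine not_resolving qr sr (x + 5) (x + 4) nofun ?_ ?_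
  case' inr.inr.inr => refine not_resolving rs sr (x - 5) (x - 6) nofun ?_ ?_
  all_goals
    simp (disch := omega) only [steps_s_intCast]
    grind (splits := 20) [height, EdgeFamily.dist, pDist, qDist, rDist, sDist]

theorem not_isEdgeResolving_s_s_intCast (hn : 6 ≤ n) {x y : ℤ} (hxy : x ≤ y)
    (hyx : 2 * (y - x) ≤ n) :
    ¬ IsEdgeResolving (Gamma n) {s (x : ZMod n), s (y : ZMod n)} := by
  have : NeZero n := ⟨by omega⟩
  by_cases hnear : 2 * (y - x) + 2 ≤ n ∧ n ≤ 2 * (y - x) + 3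
  · exact not_isEdgeResolving_s_s_intCast_of_nearly_antipodal hn hnear.1 hnear.2
  have not_resolving := not_isEdgeResolving_of_dist_eq (n := n) (by omega) (odd_height_s x)
    (odd_height_s y)
  have hcases : n = 2 * (y - x) ∨ n = 2 * (y - x) + 1 ∨ 2 * (y - x) + 4 ≤ n := by omega
  rcases hcases with h | h | h
  case' inl => refine not_resolving rs sr x x nofun ?_ ?_
  case' inr.inl => refine not_resolving pq pp (x + 2) (x - 2) nofun ?_ ?_
  case' inr.inr => refine not_resolving pp pq (x - 2) (x - 1) nofun ?_ ?_
  all_goals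
    simp (disch := omega) only [steps_s_intCast]
    grind (splits := 20) [height, EdgeFamily.dist, pDist, qDist, rDist, sDist]

theorem not_isEdgeResolving_q_q (hn : 6 ≤ n) (i j : ZMod n) :
    ¬ IsEdgeResolving (Gamma n) {q i, q j} := by
  have : NeZero n := ⟨by omega⟩
  obtain ⟨x, y, rfl, rfl, hyx, hxy⟩ := exists_intCast_lifts i j
  rcases le_total x y with h | h
  · exact not_isEdgeResolving_q_q_intCast hn h (by omega)
  · rw [Set.pair_comm]
    exact not_isEdgeResolving_q_q_intCast hn h (by omega)

theorem not_isEdgeResolving_q_s (hn : 6 ≤ n) (i j : ZMod n) :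
    ¬ IsEdgeResolving (Gamma n) {q i, s j} := by
  have : NeZero n := ⟨by omega⟩
  obtain ⟨x, y, rfl, rfl, hyx, hxy⟩ := exists_intCast_lifts i j
  exact not_isEdgeResolving_q_s_intCast hn hyx hxy

theorem not_isEdgeResolving_s_s (hn : 6 ≤ n) (i j : ZMod n) :
    ¬ IsEdgeResolving (Gamma n) {s i, s j} := by
  have : NeZero n := ⟨by omega⟩
  obtain ⟨x, y, rfl, rfl, hyx, hxy⟩ := exists_intCast_lifts i j
  rcases le_total x y with h | h
  · exact not_isEdgeResolving_s_s_intCast hn h (by omega)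
  · rw [Set.pair_comm]
    exact not_isEdgeResolving_s_s_intCast hn h (by omega)

theorem not_isEdgeResolving_pair_of_odd_height (hn : 6 ≤ n) {a b : HCLVertex n}
    (ha : Odd a.height) (hb : Odd b.height) : ¬ IsEdgeResolving (Gamma n) {a, b} := by
  obtain ⟨i, rfl | rfl⟩ := exists_eq_q_or_s_of_odd_height ha <;>
    obtain ⟨j, rfl | rfl⟩ := exists_eq_q_or_s_of_odd_height hb
  · exact not_isEdgeResolving_q_q hn i j
  · exact not_isEdgeResolving_q_s hn i j
  · rw [Set.pair_comm]
    exact not_isEdgeResolving_q_s hn j i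
  · exact not_isEdgeResolving_s_s hn i j

end OddHeight

theorem not_isEdgeResolving_pair_of_even_height (hn : 3 ≤ n) {a : HCLVertex n}
    (ha : Even a.height) (b : HCLVertex n) : ¬ IsEdgeResolving (Gamma n) {a, b} := by
  have hconn := connected_gamma hn
  have two_le : 2 ≤ n := by omega
  cases a with
  | p t =>
    have hne : t + 1 ≠ t - 1 := fun h => zmod_two_ne_zero hn (by linear_combination h)
    exact not_isEdgeResolving_pair_of_three_neighbors hconn b (adj_p_p two_le t)
      (adj_p_sub_one_p two_le t).symm (adj_p_q t) (by simpa using hne) nofun nofun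
  | r t =>
    have hne : t ≠ t - 1 := fun h => zmod_one_ne_zero two_le (by linear_combination h)
    exact not_isEdgeResolving_pair_of_three_neighbors hconn b (adj_q_r t).symm (adj_r_s t)
      (adj_s_sub_one_r t).symm nofun nofun (by simpa using hne)
  | q t => exact absurd (odd_height_q t) (Nat.not_odd_iff_even.2 ha)
  | s t => exact absurd (odd_height_s t) (Nat.not_odd_iff_even.2 ha)

theorem not_isEdgeResolving_gamma_pair (hn : 6 ≤ n) (a b : HCLVertex n) :
    ¬ IsEdgeResolving (Gamma n) {a, b} := by
  rcases a.height.even_or_odd with ha | ha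
  · exact not_isEdgeResolving_pair_of_even_height (by omega) ha b
  · rcases b.height.even_or_odd with hb | hb
    · rw [Set.pair_comm]
      exact not_isEdgeResolving_pair_of_even_height (by omega) hb a
    · exact not_isEdgeResolving_pair_of_odd_height hn ha hb

end HCLVertex

theorem gamma_no_two_element_edge_resolving (n : ℕ) (hn : 6 ≤ n) :
    ∀ W : Finset (HCLVertex n), W.card = 2 → ¬ IsEdgeResolving (Gamma n) ↑W := by
  intro W hW
  obtain ⟨a, b, -, rfl⟩ := Finset.card_eq_two.1 hW
  rw [Finset.coe_pair]
  exact HCLVertex.not_isEdgeResolving_gamma_pair hn a b
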